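/- arXiv:0706.1529 — 2 statements merged into one kernel-verified Lean document; each statement's English description precedes it below -/
import Mathlib

section
/- For every integer m ≥ 2: (a) every m-partite poset P satisfies dim(P) ≤ ⌊(m−1)(m+3)/4⌋ · B(P), and (b) there exists an m-partite poset P with dim(P) ≥ ⌊m²/4⌋ · B(P). -/
/-!
Upper bound. A linear extension of the subposet `P_{i,j}` extends to a linear extension of the
whole poset (`exists_linear_extension`), so a realizer of each `P_{i,j}` of size at most `B(P)`
lifts to `B(P)` linear extensions of `P` separating all incomparable pairs inside `Xᵢ ∪ X_j`
(`exists_lifts`). Linear extensions serving pairs `(i, j)`, `(i', j')` with `j < i'` can be merged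
into one: cut the levels into consecutive blocks and order lexicographically, by the block first
and then by the extension attached to it (`isLinearOrder_lex`). It remains to colour the intervals
`[i, j]` so that intervals of the same colour are disjoint. Give `[i, j]` the colour `(p, i mod p)`
with `p = j - i + 1` the number of its points: intervals of one colour are translates of each other
by multiples of `p`. For each `p` there are at most `min p (m + 1 - p)` colours, and the sum of
these over `2 ≤ p ≤ m` is `⌊(m + 1)² / 4⌋ - 1 = ⌊(m - 1)(m + 3) / 4⌋` (`sum_min_le`).

Lower bound. Let `k = ⌊m / 2⌋` and `I = [k] × [m - k] × {0, 1}`. The standard example on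
`I ⊔ I`, in which `a_s < b_t` iff `s ≠ t`, has dimension at least `|I| = 2 ⌊m² / 4⌋`, since a
linear extension reverses at most one pair `(a_s, b_s)`. Put `a_{(p, q, ε)}` in the level `p` and
`b_{(p, q, ε)}` in the level `k + q`. Then two levels contain at most the two pairs `(a_s, b_s)`
with `s = (p, q, 0), (p, q, 1)`, and all the `P_{i,j}` have dimension at most `2`
(`subDim_std_le`).
-/

/-- A family of linear orders `L` realizes the relation `r` if each member is a linear
order and `r x y` holds iff `x` is below `y` in every member of the family. -/
def Realizes {α : Type*} {ι : Type*} (r : α → α → Prop) (L : ι → α → α → Prop) : Prop :=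
  (∀ i, IsLinearOrder α (L i)) ∧ ∀ x y, r x y ↔ ∀ i, L i x y

/-- The order dimension of a relation `r`: the least `d` admitting a realizer of size `d`. -/
noncomputable def relDim {α : Type*} (r : α → α → Prop) : ℕ :=
  sInf {d : ℕ | ∃ L : Fin d → α → α → Prop, Realizes r L}

/-- The order dimension of the subposet induced on the subset `S`. -/
noncomputable def subDim {α : Type*} (r : α → α → Prop) (S : Set α) : ℕ :=
  relDim (fun a b : S => r (a : α) (b : α))

/-- `(X₁,…,X_m; r)` is an `m`-partite poset: the `Xᵢ` are nonempty, pairwise disjoint,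
cover everything, each `Xᵢ` is an antichain, and `x < y` forces `x ∈ Xᵢ`, `y ∈ X_j`
with `i < j`. -/
structure IsMPartite {α : Type*} (r : α → α → Prop) (m : ℕ) (X : Fin m → Set α) : Prop where
  nonempty : ∀ i, (X i).Nonempty
  disjoint : ∀ i j, i ≠ j → Disjoint (X i) (X j)
  cover : ∀ a, ∃ i, a ∈ X i
  antichain : ∀ i, ∀ x ∈ X i, ∀ y ∈ X i, r x y → x = y
  strict : ∀ x y, r x y → x ≠ y → ∃ i j, i < j ∧ x ∈ X i ∧ y ∈ X j

/-- `B(P)`: the maximum of the dimensions of the bipartite subposets `P_{i,j}`, `i < j`. -/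
noncomputable def BP {α : Type*} (r : α → α → Prop) {m : ℕ} (X : Fin m → Set α) : ℕ :=
  Finset.sup (Finset.univ.filter fun p : Fin m × Fin m => p.1 < p.2)
    (fun p => subDim r (X p.1 ∪ X p.2))

/-! ### Linear extensions and realizers -/

theorem relDim_le_card {α ι : Type*} [Fintype ι] {r : α → α → Prop} {L : ι → α → α → Prop}
    (h : Realizes r L) : relDim r ≤ Fintype.card ι := by
  refine Nat.sInf_le ⟨fun i => L ((Fintype.equivFin ι).symm i), fun i => h.1 _, fun x y => ?_⟩
  rw [h.2 x y]
  exact ((Fintype.equivFin ι).symm.forall_congr_right (q := fun i => L i x y)).symm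

/-- If `L` is a partial order on the set `S` containing the restriction of `r` to `S`, then some
linear order contains both `r` and `L`. The transitive closure of `r ∪ L` is antisymmetric
because a path of `r` between two points of `S` is already in `L`. -/
theorem exists_linear_extension {α : Type*} {r : α → α → Prop} (hr : IsPartialOrder α r)
    (S : Set α) (L : S → S → Prop) (hL : IsPartialOrder S L)
    (hrL : ∀ u v : S, r u v → L u v) :
    ∃ M : α → α → Prop, IsLinearOrder α M ∧ (∀ x y, r x y → M x y) ∧
      ∀ u v : S, L u v → M u v := by
  have rr : ∀ x, r x x := fun x => hr.refl x
  have rt : ∀ {x y z}, r x y → r y z → r x z := fun h1 h2 => hr.trans _ _ _ h1 h2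
  have ra : ∀ {x y}, r x y → r y x → x = y := fun h1 h2 => hr.antisymm _ _ h1 h2
  have Lt : ∀ {x y z}, L x y → L y z → L x z := fun h1 h2 => hL.trans _ _ _ h1 h2
  have La : ∀ {x y}, L x y → L y x → x = y := fun h1 h2 => hL.antisymm _ _ h1 h2
  let s : α → α → Prop := fun a b => r a b ∨ ∃ u v : S, r a u ∧ L u v ∧ r v b
  have hs : IsPartialOrder α s :=
    { refl := fun a => Or.inl (rr a)
      trans := by
        rintro a b c (h1 | ⟨u, v, h1, h2, h3⟩) (h4 | ⟨u', v', h4, h5, h6⟩)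
        · exact Or.inl (rt h1 h4)
        · exact Or.inr ⟨u', v', rt h1 h4, h5, h6⟩
        · exact Or.inr ⟨u, v, h1, h2, rt h3 h4⟩
        · exact Or.inr ⟨u, v', h1, Lt h2 (Lt (hrL _ _ (rt h3 h4)) h5), h6⟩
      antisymm := by
        rintro a b (h1 | ⟨u, v, h1, h2, h3⟩) (h4 | ⟨u', v', h4, h5, h6⟩)
        · exact ra h1 h4
        · obtain rfl := La h5 (hrL _ _ (rt h6 (rt h1 h4)))
          exact ra h1 (rt h4 h6)
        · obtain rfl := La h2 (hrL _ _ (rt h3 (rt h4 h1)))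
          exact ra (rt h1 h3) h4
        · have hvu' := hrL _ _ (rt h3 h4)
          have hv'u := hrL _ _ (rt h6 h1)
          obtain rfl := La h2 (Lt hvu' (Lt h5 hv'u))
          obtain rfl := La h5 (Lt hv'u hvu')
          exact ra (rt h1 h3) (rt h4 h6) }
  obtain ⟨M, hM, hsM⟩ := extend_partialOrder s
  exact ⟨M, hM, fun x y h => hsM _ _ (Or.inl h),
    fun u v h => hsM _ _ (Or.inr ⟨u, v, rr _, h, rr _⟩)⟩

/-- For `¬ r x y` there is a linear extension of `r` placing `y` below `x`. -/
theorem exists_linear_extension_not {α : Type*} {r : α → α → Prop} (hr : IsPartialOrder α r)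
    {x y : α} (hxy : ¬ r x y) :
    ∃ M : α → α → Prop, IsLinearOrder α M ∧ (∀ a b, r a b → M a b) ∧ ¬ M x y := by
  have hne : x ≠ y := fun h => hxy (h ▸ hr.refl x)
  obtain ⟨M, hM, hrM, hLM⟩ := exists_linear_extension hr {x, y}
    (fun u v => u = v ∨ ((u : α) = y ∧ (v : α) = x))
    { refl := fun u => Or.inl rfl
      trans := by
        rintro u v w (rfl | ⟨h1, h2⟩) (rfl | ⟨h3, h4⟩)
        · exact Or.inl rfl
        · exact Or.inr ⟨h3, h4⟩
        · exact Or.inr ⟨h1, h2⟩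
        · exact Or.inr ⟨h1, h4⟩
      antisymm := by
        rintro u v (rfl | ⟨h1, h2⟩) (h | ⟨h3, h4⟩)
        · rfl
        · rfl
        · exact h.symm
        · exact absurd (h2.symm.trans h3) hne }
    (by
      rintro ⟨u, rfl | rfl⟩ ⟨v, rfl | rfl⟩ h
      · exact Or.inl rfl
      · exact absurd h hxy
      · exact Or.inr ⟨rfl, rfl⟩
      · exact Or.inl rfl)
  refine ⟨M, hM, hrM, fun h => hne (hM.antisymm _ _ h ?_)⟩
  exact hLM ⟨y, Or.inr rfl⟩ ⟨x, Or.inl rfl⟩ (Or.inr ⟨rfl, rfl⟩)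

/-- A finite poset has a realizer of size `relDim r`: the infimum defining the dimension is
taken over a nonempty set. -/
theorem exists_realizer {α : Type*} [Finite α] {r : α → α → Prop} (hr : IsPartialOrder α r) :
    ∃ L : Fin (relDim r) → α → α → Prop, Realizes r L := by
  classical
  have := Fintype.ofFinite α
  have key : ∀ z : α × α, ∃ M : α → α → Prop, IsLinearOrder α M ∧ (∀ a b, r a b → M a b) ∧
      (¬ r z.1 z.2 → ¬ M z.1 z.2) := by
    intro z
    by_cases hz : r z.1 z.2
    · obtain ⟨M, hM, hrM⟩ := extend_partialOrder r
      exact ⟨M, hM, hrM, fun h => absurd hz h⟩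
    · obtain ⟨M, hM, hrM, h⟩ := exists_linear_extension_not hr hz
      exact ⟨M, hM, hrM, fun _ => h⟩
  choose M hM hrM hnot using key
  have hne : {d : ℕ | ∃ L : Fin d → α → α → Prop, Realizes r L}.Nonempty := by
    refine ⟨Fintype.card (α × α), fun i => M ((Fintype.equivFin (α × α)).symm i),
      fun i => hM _, fun x y => ⟨fun h i => hrM _ _ _ h, fun h => ?_⟩⟩
    by_contra hxy
    have := h (Fintype.equivFin (α × α) (x, y))
    simp only [Equiv.symm_apply_apply] at this
    exact hnot (x, y) hxy this
  exact Nat.sInf_mem hne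

/-- Lexicographic order: first by the block `β x`, then, inside the block `t`, by `K t`. -/
theorem isLinearOrder_lex {α : Type*} (β : α → ℕ) (K : ℕ → α → α → Prop)
    (hK : ∀ t, IsLinearOrder α (K t)) :
    IsLinearOrder α (fun x y => β x < β y ∨ (β x = β y ∧ K (β x) x y)) :=
  { refl := fun x => Or.inr ⟨rfl, (hK _).refl x⟩
    trans := by
      rintro x y z (h1 | ⟨h1, h2⟩) (h3 | ⟨h3, h4⟩)
      · exact Or.inl (h1.trans h3)
      · exact Or.inl (h3 ▸ h1)
      · exact Or.inl (h1 ▸ h3)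
      · rw [← h1] at h4
        exact Or.inr ⟨h1.trans h3, (hK _).trans _ _ _ h2 h4⟩
    antisymm := by
      rintro x y (h1 | ⟨h1, h2⟩) (h3 | ⟨h3, h4⟩)
      · omega
      · omega
      · omega
      · rw [← h1] at h4
        exact (hK _).antisymm _ _ h2 h4
    total := by
      intro x y
      rcases lt_trichotomy (β x) (β y) with h | h | h
      · exact Or.inl (Or.inl h)
      · rcases (hK (β x)).total x y with h' | h'
        · exact Or.inl (Or.inr ⟨h, h'⟩)
        · exact Or.inr (Or.inr ⟨h.symm, h ▸ h'⟩)
      · exact Or.inr (Or.inl h) }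

/-! ### The upper bound -/

theorem subDim_le_BP {α : Type*} (r : α → α → Prop) {m : ℕ} (X : Fin m → Set α)
    {i j : Fin m} (hij : i < j) : subDim r (X i ∪ X j) ≤ BP r X :=
  Finset.le_sup (f := fun p : Fin m × Fin m => subDim r (X p.1 ∪ X p.2))
    (b := (i, j)) (by simpa using hij)

/-- A set of dimension at most `B` admits `B` linear extensions of the whole poset separating
all its incomparable pairs. -/
theorem exists_lifts {α : Type*} [Finite α] {r : α → α → Prop} (hr : IsPartialOrder α r)
    (S : Set α) {B : ℕ} (hB : subDim r S ≤ B) :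
    ∃ M : Fin B → α → α → Prop, (∀ b, IsLinearOrder α (M b)) ∧
      (∀ b x y, r x y → M b x y) ∧ ∀ x ∈ S, ∀ y ∈ S, ¬ r x y → ∃ b, ¬ M b x y := by
  have hrS : IsPartialOrder S (fun a b : S => r a b) :=
    { refl := fun a => hr.refl _
      trans := fun a b c h1 h2 => hr.trans _ _ _ h1 h2
      antisymm := fun a b h1 h2 => Subtype.ext (hr.antisymm _ _ h1 h2) }
  obtain ⟨L, hL, hLr⟩ := exists_realizer hrS
  have key : ∀ b : Fin B, ∃ M : α → α → Prop, IsLinearOrder α M ∧ (∀ x y, r x y → M x y) ∧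
      ∀ h : (b : ℕ) < subDim r S, ∀ u v : S, L ⟨b, h⟩ u v → M u v := by
    intro b
    by_cases h : (b : ℕ) < subDim r S
    · have := hL ⟨b, h⟩
      obtain ⟨M, hM, hrM, hLM⟩ := exists_linear_extension hr S (L ⟨b, h⟩) inferInstance
        (fun u v huv => (hLr u v).1 huv _)
      exact ⟨M, hM, hrM, fun _ => hLM⟩
    · obtain ⟨M, hM, hrM⟩ := extend_partialOrder r
      exact ⟨M, hM, hrM, fun h' => absurd h' h⟩
  choose M hM hrM hLM using key
  refine ⟨M, hM, hrM, fun x hx y hy hxy => ?_⟩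
  have hex : ∃ i, ¬ L i ⟨x, hx⟩ ⟨y, hy⟩ := by
    by_contra! hcon
    exact hxy ((hLr ⟨x, hx⟩ ⟨y, hy⟩).2 hcon)
  obtain ⟨i, hi⟩ := hex
  refine ⟨⟨i, i.2.trans_le hB⟩, fun hMxy => hi ?_⟩
  have hyx : L i ⟨y, hy⟩ ⟨x, hx⟩ := ((hL i).total ⟨x, hx⟩ ⟨y, hy⟩).resolve_left hi
  have hMyx := hLM ⟨i, i.2.trans_le hB⟩ i.2 ⟨y, hy⟩ ⟨x, hx⟩ hyx
  obtain rfl : x = y := (hM _).antisymm _ _ hMxy hMyx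
  exact (hL i).refl _

theorem sum_min_eq (m : ℕ) : ∑ q ∈ Finset.range m, min (q + 1) (m - q) = (m + 1) ^ 2 / 4 := by
  induction m using Nat.strong_induction_on with
  | _ m ih =>
    match m with
    | 0 => simp
    | 1 => simp
    | m + 2 =>
      rw [Finset.sum_range_succ, Finset.sum_range_succ']
      have h : ∑ k ∈ Finset.range m, min (k + 1 + 1) (m + 2 - (k + 1)) =
          ∑ k ∈ Finset.range m, (min (k + 1) (m - k) + 1) := by
        refine Finset.sum_congr rfl fun k hk => ?_
        have := Finset.mem_range.1 hk
        omega
      rw [h, Finset.sum_add_distrib, ih m (by omega)]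
      have h2 : (m + 2 + 1) ^ 2 = (m + 1) ^ 2 + 4 * (m + 2) := by ring
      simp only [Finset.sum_const, Finset.card_range, smul_eq_mul]
      omega

/-- The number of colours `(p, c)` with `2 ≤ p ≤ m` and `c < min p (m + 1 - p)`; the index `q` of
the sum stands for `p - 2`. -/
theorem sum_min_le {m : ℕ} (hm : 2 ≤ m) :
    ∑ q : Fin (m - 1), min ((q : ℕ) + 2) (m - 1 - q) ≤
    (m - 1) * (m + 3) / 4 := by
  obtain ⟨n, rfl⟩ : ∃ n, m = n + 1 := ⟨m - 1, by omega⟩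
  have h := sum_min_eq (n + 1)
  rw [Finset.sum_range_succ'] at h
  change ∑ q : Fin n, min ((q : ℕ) + 2) (n - q) ≤ n * (n + 1 + 3) / 4
  rw [Fin.sum_univ_eq_sum_range (fun q => min (q + 2) (n - q)) n]
  have h' : ∑ q ∈ Finset.range n, min (q + 2) (n - q) =
      ∑ k ∈ Finset.range n, min (k + 1 + 1) (n + 1 - (k + 1)) := by
    refine Finset.sum_congr rfl fun k hk => ?_
    omega
  have h2 : (n + 1 + 1) ^ 2 = n * (n + 1 + 3) + 4 := by ring
  rw [h']
  omega

theorem relDim_le_of_isMPartite {m : ℕ} (hm : 2 ≤ m) {α : Type*} [Finite α]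
    {r : α → α → Prop} (hr : IsPartialOrder α r) {X : Fin m → Set α} (hX : IsMPartite r m X) :
    relDim r ≤ ((m - 1) * (m + 3) / 4) * BP r X := by
  choose lev hlev using hX.cover
  have hlev_unique : ∀ x i, x ∈ X i → lev x = i := by
    intro x i hx
    by_contra hne
    exact Set.disjoint_left.1 (hX.disjoint _ _ hne) (hlev x) hx
  have hmono : ∀ x y, r x y → (lev x : ℕ) ≤ lev y := by
    intro x y hxy
    by_cases hne : x = y
    · rw [hne]
    · obtain ⟨i, j, hij, hx, hy⟩ := hX.strict x y hxy hne
      rw [hlev_unique x i hx, hlev_unique y j hy]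
      exact hij.le
  have key : ∀ i j : ℕ, ∃ M : Fin (BP r X) → α → α → Prop, (∀ b, IsLinearOrder α (M b)) ∧
      (∀ b x y, r x y → M b x y) ∧ (i < j → j < m → ∀ x y,
        ((lev x : ℕ) = i ∨ (lev x : ℕ) = j) → ((lev y : ℕ) = i ∨ (lev y : ℕ) = j) →
        ¬ r x y → ∃ b, ¬ M b x y) := by
    intro i j
    by_cases h : i < j ∧ j < m
    · obtain ⟨M, hM, hrM, hsep⟩ := exists_lifts hr _
        (subDim_le_BP r X (i := ⟨i, h.1.trans h.2⟩) (j := ⟨j, h.2⟩) h.1)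
      have hmem : ∀ x, ((lev x : ℕ) = i ∨ (lev x : ℕ) = j) →
          x ∈ X ⟨i, h.1.trans h.2⟩ ∪ X ⟨j, h.2⟩ := by
        rintro x (hx | hx)
        · exact Or.inl ((Fin.ext hx : lev x = ⟨i, h.1.trans h.2⟩) ▸ hlev x)
        · exact Or.inr ((Fin.ext hx : lev x = ⟨j, h.2⟩) ▸ hlev x)
      exact ⟨M, hM, hrM, fun _ _ x y hx hy => hsep x (hmem x hx) y (hmem y hy)⟩
    · obtain ⟨M, hM, hrM⟩ := extend_partialOrder r
      exact ⟨fun _ => M, fun _ => hM, fun _ => hrM, fun h1 h2 => absurd ⟨h1, h2⟩ h⟩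
  choose M hM hrM hsep using key
  -- For the colour `(p, c)`, the levels `c + t * p, …, c + t * p + p - 1` form the block `t + 1`.
  let β : ℕ → ℕ → α → ℕ := fun p c x => (lev x + (p - c)) / p
  let N : (Σ q : Fin (m - 1), Fin (min ((q : ℕ) + 2) (m - 1 - q))) × Fin (BP r X) →
      α → α → Prop := fun z x y =>
    β (z.1.1 + 2) z.1.2 x < β (z.1.1 + 2) z.1.2 y ∨
      (β (z.1.1 + 2) z.1.2 x = β (z.1.1 + 2) z.1.2 y ∧
        (fun t => M (z.1.2 + (t - 1) * (z.1.1 + 2)) (z.1.2 + (t - 1) * (z.1.1 + 2) + (z.1.1 + 1))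
          z.2) (β (z.1.1 + 2) z.1.2 x) x y)
  have hN : Realizes r N := by
    refine ⟨fun z => isLinearOrder_lex (β (z.1.1 + 2) z.1.2)
        (fun t => M (z.1.2 + (t - 1) * (z.1.1 + 2)) (z.1.2 + (t - 1) * (z.1.1 + 2) + (z.1.1 + 1))
          z.2) fun t => hM _ _ _,
      fun x y => ⟨fun hxy z => ?_, fun h => ?_⟩⟩
    · have hβ : β (z.1.1 + 2) z.1.2 x ≤ β (z.1.1 + 2) z.1.2 y :=
        Nat.div_le_div_right (Nat.add_le_add_right (hmono x y hxy) _)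
      rcases hβ.lt_or_eq with hlt | heq
      · exact Or.inl hlt
      · exact Or.inr ⟨heq, hrM _ _ _ _ _ hxy⟩
    · by_contra hxy
      have hij : ∃ i j : ℕ, i < j ∧ j < m ∧ ((lev x : ℕ) = i ∨ (lev x : ℕ) = j) ∧
          ((lev y : ℕ) = i ∨ (lev y : ℕ) = j) := by
        have hx := (lev x).2
        have hy := (lev y).2
        rcases lt_trichotomy (lev x : ℕ) (lev y) with h | h | h
        · exact ⟨lev x, lev y, by omega, by omega, by omega, by omega⟩
        · by_cases h0 : (lev x : ℕ) = 0
          · exact ⟨0, 1, by omega, by omega, by omega, by omega⟩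
          · exact ⟨lev x - 1, lev x, by omega, by omega, by omega, by omega⟩
        · exact ⟨lev y, lev x, by omega, by omega, by omega, by omega⟩
      obtain ⟨i, j, hij, hjm, hx, hy⟩ := hij
      obtain ⟨b, hb⟩ := hsep i j hij hjm x y hx hy hxy
      obtain ⟨q, rfl⟩ : ∃ q, j = i + (q + 1) := ⟨j - i - 1, by omega⟩
      have hcq : i % (q + 2) < q + 2 := Nat.mod_lt _ (by omega)
      have hci : i % (q + 2) ≤ i := Nat.mod_le _ _
      have hdiv : i % (q + 2) + i / (q + 2) * (q + 2) = i := by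
        rw [mul_comm]; exact Nat.mod_add_div _ _
      have hβ : ∀ w, ((lev w : ℕ) = i ∨ (lev w : ℕ) = i + (q + 1)) →
          β (q + 2) (i % (q + 2)) w = i / (q + 2) + 1 := by
        intro w hw
        have h1 : (i / (q + 2) + 1) * (q + 2) = i / (q + 2) * (q + 2) + (q + 2) := by ring
        refine Nat.div_eq_of_lt_le ?_ ?_
        · rw [h1]; omega
        · rw [Nat.succ_mul, h1]; omega
      have hz := h (⟨⟨q, by omega⟩, ⟨i % (q + 2), lt_min hcq (by simp only; omega)⟩⟩, b)
      simp only [N, hβ x hx, hβ y hy, lt_irrefl, false_or, true_and, Nat.add_sub_cancel,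
        hdiv] at hz
      exact hb hz
  calc relDim r ≤ _ := relDim_le_card hN
    _ = (∑ q : Fin (m - 1), min ((q : ℕ) + 2) (m - 1 - q)) * BP r X := by simp
    _ ≤ _ := Nat.mul_le_mul_right _ (sum_min_le hm)

/-! ### The lower bound -/

/-- The standard example on `I ⊔ I`: the element `inl s` is below `inr t` iff `s ≠ t`. -/
def stdRel (I : Type*) : I ⊕ I → I ⊕ I → Prop
  | .inl s, .inr t => s ≠ t
  | .inl s, .inl t => s = t
  | .inr s, .inr t => s = t
  | .inr _, .inl _ => False

theorem isPartialOrder_stdRel (I : Type*) : IsPartialOrder (I ⊕ I) (stdRel I) :=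
  { refl := by rintro (s | s) <;> rfl
    trans := by
      rintro (a | a) (b | b) (c | c) h1 h2 <;> simp_all [stdRel]
    antisymm := by
      rintro (a | a) (b | b) h1 h2 <;> simp_all [stdRel] }

/-- The standard example has dimension at least `|I|`, because a linear extension cannot put
both `inr s` below `inl s` and `inr t` below `inl t` for `s ≠ t`. -/
theorem card_le_relDim_stdRel (I : Type*) [Fintype I] :
    Fintype.card I ≤ relDim (stdRel I) := by
  obtain ⟨L, hL, hLr⟩ := exists_realizer (isPartialOrder_stdRel I)
  have hex : ∀ s : I, ∃ i, ¬ L i (.inl s) (.inr s) := by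
    intro s
    by_contra! hcon
    exact (hLr (.inl s) (.inr s)).2 hcon rfl
  choose g hg using hex
  have hinj : Function.Injective g := by
    intro s t hst
    by_contra hne
    have h1 := ((hL (g s)).total (.inl s) (.inr s)).resolve_left (hg s)
    have h2 : L (g s) (.inl t) (.inr s) :=
      (hLr (.inl t) (.inr s)).1 (fun h => hne h.symm) _
    have h3 : L (g s) (.inl s) (.inr t) := (hLr (.inl s) (.inr t)).1 hne _
    exact hg t (hst ▸ (hL (g s)).trans _ _ _ h2 ((hL (g s)).trans _ _ _ h1 h3))
  simpa using Fintype.card_le_of_injective g hinj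

/-- A two-dimensional representation: ties, which occur simultaneously in `l₁` and in `l₂`, are
broken by an arbitrary enumeration in the first order and by its reverse in the second. -/
theorem relDim_le_two {γ : Type*} [Finite γ] {r : γ → γ → Prop} (l₁ l₂ : γ → ℕ)
    (htie : ∀ x y, l₁ x = l₁ y ↔ l₂ x = l₂ y)
    (hr : ∀ x y, r x y ↔ x = y ∨ (l₁ x < l₁ y ∧ l₂ x < l₂ y)) : relDim r ≤ 2 := by
  have := Fintype.ofFinite γ
  let f : γ → Fin (Fintype.card γ) := Fintype.equivFin γ
  have hf : Function.Injective f := (Fintype.equivFin γ).injective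
  have hup : IsLinearOrder γ (fun x y => f x ≤ f y) :=
    { refl := fun x => le_rfl
      trans := fun x y z h1 h2 => le_trans h1 h2
      antisymm := fun x y h1 h2 => hf (le_antisymm h1 h2)
      total := fun x y => le_total _ _ }
  have hdown : IsLinearOrder γ (fun x y => f y ≤ f x) :=
    { refl := fun x => le_rfl
      trans := fun x y z h1 h2 => le_trans h2 h1
      antisymm := fun x y h1 h2 => hf (le_antisymm h2 h1)
      total := fun x y => le_total _ _ }
  have hL : Realizes r (fun b : Bool => if b then
      (fun x y => l₁ x < l₁ y ∨ (l₁ x = l₁ y ∧ f x ≤ f y)) else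
      (fun x y => l₂ x < l₂ y ∨ (l₂ x = l₂ y ∧ f y ≤ f x))) := by
    refine ⟨?_, fun x y => ?_⟩
    · rintro (_ | _)
      · exact isLinearOrder_lex l₂ (fun _ x y => f y ≤ f x) fun _ => hdown
      · exact isLinearOrder_lex l₁ (fun _ x y => f x ≤ f y) fun _ => hup
    · rw [hr x y, Bool.forall_bool]
      simp only [Bool.false_eq_true, if_false, if_true]
      constructor
      · rintro (rfl | ⟨h1, h2⟩)
        · exact ⟨Or.inr ⟨rfl, le_rfl⟩, Or.inr ⟨rfl, le_rfl⟩⟩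
        · exact ⟨Or.inl h2, Or.inl h1⟩
      · rintro ⟨h1 | ⟨h1, h2⟩, h3 | ⟨h3, h4⟩⟩
        · exact Or.inr ⟨h3, h1⟩
        · have := (htie x y).1 h3
          omega
        · have := (htie x y).2 h1
          omega
        · exact Or.inl (hf (le_antisymm h4 h2))
  simpa using relDim_le_card hL

/-- The level of an element of the standard example on `[k] × [l] × {0, 1}`: the first coordinate
for the minimal elements, `k` plus the second coordinate for the maximal ones. -/
def stdLev (k l : ℕ) :
    (Fin k × Fin l × Bool) ⊕ (Fin k × Fin l × Bool) → ℕ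
  | .inl s => s.1
  | .inr t => k + t.2.1

/-- Two levels of the standard example on `[k] × [l] × {0, 1}` span a poset of dimension at
most `2`. -/
theorem subDim_std_le {k l i j : ℕ} (hij : i < j) :
    subDim (stdRel (Fin k × Fin l × Bool))
      ({x | stdLev k l x = i} ∪ {x | stdLev k l x = j}) ≤ 2 := by
  by_cases h : i < k ∧ k ≤ j
  · -- Let `a₀, a₁` and `b₀, b₁` carry the index `(i, j - k, ε)`, and let `A`, `B` be the other
    -- minimal and maximal elements. The two orders are `a₁ < A < b₀ < a₀ < B < b₁` and
    -- `a₀ < A < b₁ < a₁ < B < b₀`.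
    refine relDim_le_two
      (fun x => match x.1 with
        | .inl s => if (s.2.1 : ℕ) = j - k then (if s.2.2 then 0 else 3) else 1
        | .inr t => if (t.1 : ℕ) = i then (if t.2.2 then 5 else 2) else 4)
      (fun x => match x.1 with
        | .inl s => if (s.2.1 : ℕ) = j - k then (if s.2.2 then 3 else 0) else 1
        | .inr t => if (t.1 : ℕ) = i then (if t.2.2 then 2 else 5) else 4) ?_ ?_
    · rintro ⟨⟨p, q, b⟩ | ⟨p, q, b⟩, hx⟩ ⟨⟨p', q', b'⟩ | ⟨p', q', b'⟩, hy⟩ <;>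
        cases b <;> cases b' <;> simp only [] <;> split_ifs <;> simp_all
    · rintro ⟨⟨p, q, b⟩ | ⟨p, q, b⟩, hx⟩ ⟨⟨p', q', b'⟩ | ⟨p', q', b'⟩, hy⟩ <;>
        simp only [stdLev, Set.mem_union, Set.mem_ofPred_eq] at hx hy <;>
        have := p.2 <;> have := p'.2 <;>
        simp only [stdRel, Subtype.mk.injEq, Sum.inl.injEq, Sum.inr.injEq, Prod.mk.injEq,
          Fin.ext_iff, ne_eq, reduceCtorEq] <;>
        cases b <;> cases b' <;> simp <;> split_ifs <;> omega
  · -- Both levels consist of minimal elements, or both of maximal ones: an antichain.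
    refine relDim_le_two (fun _ => 0) (fun _ => 0) (by simp) ?_
    rintro ⟨⟨p, q, b⟩ | ⟨p, q, b⟩, hx⟩ ⟨⟨p', q', b'⟩ | ⟨p', q', b'⟩, hy⟩ <;>
      simp only [stdLev, Set.mem_union, Set.mem_ofPred_eq] at hx hy <;>
      have := p.2 <;> have := p'.2 <;> (simp [stdRel]; try omega)

theorem isMPartite_std {k l m : ℕ} (hk : 0 < k) (hl : 0 < l) (hm : k + l = m) :
    IsMPartite (stdRel (Fin k × Fin l × Bool)) m (fun i => {x | stdLev k l x = i}) :=
  { nonempty := by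
      intro i
      by_cases h : (i : ℕ) < k
      · exact ⟨.inl (⟨i, h⟩, ⟨0, hl⟩, true), rfl⟩
      · refine ⟨.inr (⟨0, hk⟩, ⟨i - k, by omega⟩, true), ?_⟩
        simp only [stdLev, Set.mem_ofPred_eq]
        omega
    disjoint := by
      intro i j hij
      refine Set.disjoint_left.2 fun x hx hy => hij (Fin.ext ?_)
      exact hx.symm.trans hy
    cover := by
      rintro (⟨p, q, b⟩ | ⟨p, q, b⟩)
      · exact ⟨⟨p, by omega⟩, rfl⟩
      · exact ⟨⟨k + q, by omega⟩, rfl⟩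
    antichain := by
      rintro i (⟨p, q, b⟩ | ⟨p, q, b⟩) hx (⟨p', q', b'⟩ | ⟨p', q', b'⟩) hy h
      · exact congrArg _ h
      · simp only [stdLev, Set.mem_ofPred_eq] at hx hy
        omega
      · exact h.elim
      · exact congrArg _ h
    strict := by
      rintro (⟨p, q, b⟩ | ⟨p, q, b⟩) (⟨p', q', b'⟩ | ⟨p', q', b'⟩) h hne
      · exact absurd (congrArg _ h) hne
      · refine ⟨⟨p, by omega⟩, ⟨k + q', by omega⟩, ?_, rfl, rfl⟩
        simp only [Fin.mk_lt_mk]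
        omega
      · exact h.elim
      · exact absurd (congrArg _ h) hne }

/-- For every `m ≥ 2`: (a) every `m`-partite poset `P` satisfies
`dim(P) ≤ ⌊(m-1)(m+3)/4⌋ · B(P)`, and (b) there exists an `m`-partite poset `P` with
`dim(P) ≥ ⌊m²/4⌋ · B(P)`. -/
theorem mpartite_upper_and_lower {m : ℕ} (hm : 2 ≤ m) :
    (∀ (α : Type) (_ : Fintype α) (r : α → α → Prop), IsPartialOrder α r →
      ∀ X : Fin m → Set α, IsMPartite r m X →
        relDim r ≤ ((m - 1) * (m + 3) / 4) * BP r X) ∧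
    (∃ (α : Type) (_ : Fintype α) (r : α → α → Prop) (_ : IsPartialOrder α r)
      (X : Fin m → Set α), IsMPartite r m X ∧ (m ^ 2 / 4) * BP r X ≤ relDim r) := by
  refine ⟨fun α _ r hr X hX => relDim_le_of_isMPartite hm hr hX, ?_⟩
  obtain ⟨k, l, hk, hl, hkl, hklm⟩ : ∃ k l : ℕ, 0 < k ∧ 0 < l ∧ k + l = m ∧
      m ^ 2 / 4 ≤ k * l := by
    refine ⟨m / 2, m - m / 2, by omega, by omega, by omega, ?_⟩
    rcases Nat.even_or_odd' m with ⟨n, rfl | rfl⟩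
    · rw [show 2 * n / 2 = n by omega, show 2 * n - n = n by omega]
      have : (2 * n) ^ 2 = 4 * (n * n) := by ring
      omega
    · rw [show (2 * n + 1) / 2 = n by omega, show 2 * n + 1 - n = n + 1 by omega]
      have : (2 * n + 1) ^ 2 = 4 * (n * (n + 1)) + 1 := by ring
      omega
  refine ⟨_, inferInstance, stdRel (Fin k × Fin l × Bool), isPartialOrder_stdRel _,
    fun i => {x | stdLev k l x = i}, isMPartite_std hk hl hkl, ?_⟩
  have hB : BP (stdRel (Fin k × Fin l × Bool))
      (fun i : Fin m => {x | stdLev k l x = i}) ≤ 2 := by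
    refine Finset.sup_le fun p hp => subDim_std_le ?_
    simpa using hp
  calc _ ≤ k * l * 2 := Nat.mul_le_mul hklm hB
    _ = Fintype.card (Fin k × Fin l × Bool) := by simp [mul_assoc]
    _ ≤ _ := card_le_relDim_stdRel _
end

section
/- There is no function f : ℕ × ℕ → ℕ with the following property: for every finite poset P = (X,≤) and all subsets Y, Z ⊆ X with Y ∪ Z = X such that the set of minimal elements of the subposet P₁ induced on Y equals the set of maximal elements of the subposet P₂ induced on Z and equals Y ∩ Z, one has dim(P) ≤ f(dim(P₁), dim(P₂)). -/
/-- The standard example on `Bool × Fin (n + 1)`: `(false, i)` is the lower element `bᵢ`,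
`(true, i)` is the upper element `aᵢ`, and `bᵢ < aⱼ` iff `i ≠ j`. -/
def stdExample (n : ℕ) (x y : Bool × Fin (n + 1)) : Prop :=
  x = y ∨ (x.1 = false ∧ y.1 = true ∧ x.2 ≠ y.2)

lemma stdExample_isPartialOrder (n : ℕ) : IsPartialOrder _ (stdExample n) where
  refl x := Or.inl rfl
  trans x y z h1 h2 := by
    rcases h1 with rfl | h1
    · exact h2
    · rcases h2 with rfl | h2
      · exact Or.inr h1
      · exact absurd (h1.2.1.symm.trans h2.1) (by simp)
  antisymm x y h1 h2 := by
    rcases h1 with h1 | h1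
    · exact h1
    · rcases h2 with h2 | h2
      · exact h2.symm
      · exact absurd (h1.2.1.symm.trans h2.1) (by simp)

/-- An incomparable or reversed pair `¬ r x y` is reversed by some linear extension of `r`. -/
lemma exists_linear_extension_s13 {α : Type} {r : α → α → Prop} (hr : IsPartialOrder α r)
    {x y : α} (hxy : ¬ r x y) :
    ∃ s : α → α → Prop, IsLinearOrder α s ∧ r ≤ s ∧ s y x := by
  -- The transitive closure of `r` with the pair `(y, x)` added.
  have h : IsPartialOrder α (fun a b => r a b ∨ (r a y ∧ r x b)) := by
    have T : ∀ {a b c}, r a b → r b c → r a c := fun h h' => hr.trans _ _ _ h h'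
    refine { refl := fun a => Or.inl (hr.refl a), trans := ?_, antisymm := ?_ }
    · rintro a b c (h1 | ⟨h1, h1'⟩) (h2 | ⟨h2, h2'⟩)
      · exact Or.inl (T h1 h2)
      · exact Or.inr ⟨T h1 h2, h2'⟩
      · exact Or.inr ⟨h1, T h1' h2⟩
      · exact absurd (T h1' h2) hxy
    · rintro a b (h1 | ⟨h1, h1'⟩) (h2 | ⟨h2, h2'⟩)
      · exact hr.antisymm _ _ h1 h2
      · exact absurd (T h2' (T h1 h2)) hxy
      · exact absurd (T h1' (T h2 h1)) hxy
      · exact absurd (T h1' h2) hxy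
  obtain ⟨s, hs, hle⟩ := extend_partialOrder (fun a b => r a b ∨ (r a y ∧ r x b))
  exact ⟨s, hs, fun a b hab => hle a b (Or.inl hab),
    hle y x (Or.inr ⟨hr.refl y, hr.refl x⟩)⟩

lemma exists_realizes {α : Type} [Finite α] {r : α → α → Prop} (hr : IsPartialOrder α r) :
    ∃ d : ℕ, ∃ L : Fin d → α → α → Prop, Realizes r L := by
  have key : ∀ p : {p : α × α // ¬ r p.1 p.2},
      ∃ s : α → α → Prop, IsLinearOrder α s ∧ r ≤ s ∧ s p.1.2 p.1.1 :=
    fun p => exists_linear_extension_s13 hr p.2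
  choose s hs hle hrev using key
  obtain ⟨d, ⟨e⟩⟩ := Finite.exists_equiv_fin {p : α × α // ¬ r p.1 p.2}
  refine ⟨d, fun i => s (e.symm i), fun i => hs _, fun x y =>
    ⟨fun h i => hle _ x y h, fun h => ?_⟩⟩
  by_contra hxy
  have h1 : s ⟨(x, y), hxy⟩ x y := by simpa using h (e ⟨(x, y), hxy⟩)
  have h2 : s ⟨(x, y), hxy⟩ y x := hrev ⟨(x, y), hxy⟩
  have : x = y := (hs ⟨(x, y), hxy⟩).antisymm _ _ h1 h2
  exact hxy (this ▸ hr.refl x)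

/-- Sending `i` to a linear order in which `aᵢ` is below `bᵢ` is injective. -/
lemma card_le_of_realizes {n d : ℕ} {L : Fin d → Bool × Fin (n + 1) → Bool × Fin (n + 1) → Prop}
    (hL : Realizes (stdExample n) L) : n + 1 ≤ d := by
  obtain ⟨hlin, hreal⟩ := hL
  have key : ∀ i : Fin (n + 1), ∃ k, ¬ L k (false, i) (true, i) := by
    intro i
    by_contra! h
    simpa [stdExample] using (hreal _ _).2 h
  choose k hk using key
  have hinj : Function.Injective k := by
    intro i j hij
    by_contra hne
    have hl := hlin (k i)
    have h1 : L (k i) (false, i) (true, j) :=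
      (hreal _ _).1 (Or.inr ⟨rfl, rfl, hne⟩) _
    have h2 : L (k i) (true, j) (false, j) :=
      (hl.total _ _).resolve_left (hij ▸ hk j)
    have h3 : L (k i) (false, j) (true, i) :=
      (hreal _ _).1 (Or.inr ⟨rfl, rfl, Ne.symm hne⟩) _
    exact hk i (hl.trans _ _ _ h1 (hl.trans _ _ _ h2 h3))
  simpa using Fintype.card_le_of_injective k hinj

lemma lt_relDim_stdExample (n : ℕ) : n < relDim (stdExample n) := by
  obtain ⟨L, hL⟩ := Nat.sInf_mem (exists_realizes (stdExample_isPartialOrder n))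
  exact card_le_of_realizes hL

/-- An embedding of a relation into `ℤ × ℤ` with both coordinates injective gives a realizer of
size two. -/
lemma relDim_le_two_s13 {α : Type} {r : α → α → Prop} (k₀ k₁ : α → ℤ)
    (h₀ : Function.Injective k₀) (h₁ : Function.Injective k₁)
    (h : ∀ x y, r x y ↔ k₀ x ≤ k₀ y ∧ k₁ x ≤ k₁ y) : relDim r ≤ 2 := by
  have lin : ∀ k : α → ℤ, Function.Injective k → IsLinearOrder α (fun x y => k x ≤ k y) :=
    fun k hk =>
      { refl := fun _ => le_rfl
        trans := fun _ _ _ => le_trans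
        antisymm := fun _ _ h1 h2 => hk (le_antisymm h1 h2)
        total := fun _ _ => le_total _ _ }
  refine Nat.sInf_le ⟨![fun x y => k₀ x ≤ k₀ y, fun x y => k₁ x ≤ k₁ y], ?_, ?_⟩
  · intro i
    fin_cases i
    · exact lin k₀ h₀
    · exact lin k₁ h₁
  · intro x y
    simpa [Fin.forall_fin_two] using h x y

/-- The upper elements together with `b₀`. -/
def upperPart (n : ℕ) : Set (Bool × Fin (n + 1)) := {p | p.1 = true ∨ p.2 = 0}

/-- The lower elements together with `a₀`. -/
def lowerPart (n : ℕ) : Set (Bool × Fin (n + 1)) := {p | p.1 = false ∨ p.2 = 0}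

/-- The two orders are `a₀ < b₀ < a₁ < ⋯ < aₙ` and `b₀ < aₙ < ⋯ < a₁ < a₀`. -/
lemma subDim_upperPart (n : ℕ) : subDim (stdExample n) (upperPart n) ≤ 2 := by
  refine relDim_le_two_s13
    (fun p => if p.1.1 = true then (if p.1.2.val = 0 then -1 else (p.1.2.val : ℤ)) else 0)
    (fun p => if p.1.1 = true then -(p.1.2.val : ℤ) else -(n + 1 : ℤ)) ?_ ?_ ?_
  all_goals
    rintro ⟨⟨x, i, hi⟩, hx⟩ ⟨⟨y, j, hj⟩, hy⟩
    have hx' : x = true ∨ i = 0 := hx.imp id (congrArg Fin.val)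
    have hy' : y = true ∨ j = 0 := hy.imp id (congrArg Fin.val)
    cases x <;> cases y <;> simp [stdExample] at hx' hy' ⊢ <;> grind

/-- The two orders are `bₙ < ⋯ < b₁ < a₀ < b₀` and `b₀ < b₁ < ⋯ < bₙ < a₀`. -/
lemma subDim_lowerPart (n : ℕ) : subDim (stdExample n) (lowerPart n) ≤ 2 := by
  refine relDim_le_two_s13
    (fun p => if p.1.1 = false then (if p.1.2.val = 0 then 1 else -(p.1.2.val : ℤ)) else 0)
    (fun p => if p.1.1 = false then (p.1.2.val : ℤ) else (n + 1 : ℤ)) ?_ ?_ ?_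
  all_goals
    rintro ⟨⟨x, i, hi⟩, hx⟩ ⟨⟨y, j, hj⟩, hy⟩
    have hx' : x = false ∨ i = 0 := hx.imp id (congrArg Fin.val)
    have hy' : y = false ∨ j = 0 := hy.imp id (congrArg Fin.val)
    cases x <;> cases y <;> simp [stdExample] at hx' hy' ⊢ <;> grind

lemma minimal_upperPart (n : ℕ) :
    {y ∈ upperPart n | ∀ y' ∈ upperPart n, stdExample n y' y → y' = y} =
      upperPart n ∩ lowerPart n := by
  ext ⟨x, i⟩
  constructor
  · rintro ⟨hp, h⟩
    refine ⟨hp, ?_⟩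
    by_contra hq
    have hq' : ¬ (x = false ∨ i = 0) := hq
    push Not at hq'
    have := h (false, 0) (Or.inr rfl) (Or.inr ⟨rfl, by simpa using hq'.1, hq'.2.symm⟩)
    exact hq'.2 (congrArg Prod.snd this).symm
  · rintro ⟨hp, hq⟩
    refine ⟨hp, fun y hy hr => ?_⟩
    rcases y with ⟨y, j⟩
    simp only [upperPart, lowerPart, stdExample, Set.mem_ofPred_eq] at *
    grind

lemma maximal_lowerPart (n : ℕ) :
    {z ∈ lowerPart n | ∀ z' ∈ lowerPart n, stdExample n z z' → z' = z} =
      upperPart n ∩ lowerPart n := by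
  ext ⟨x, i⟩
  constructor
  · rintro ⟨hp, h⟩
    refine ⟨?_, hp⟩
    by_contra hq
    have hq' : ¬ (x = true ∨ i = 0) := hq
    push Not at hq'
    have := h (true, 0) (Or.inr rfl) (Or.inr ⟨by simpa using hq'.1, rfl, hq'.2⟩)
    exact hq'.2 (congrArg Prod.snd this).symm
  · rintro ⟨hp, hq⟩
    refine ⟨hq, fun y hy hr => ?_⟩
    rcases y with ⟨y, j⟩
    simp only [upperPart, lowerPart, stdExample, Set.mem_ofPred_eq] at *
    grind

/-- There is no function `f : ℕ × ℕ → ℕ` such that whenever a finite poset `P` on `X` is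
covered by `Y ∪ Z = X` with `min(P₁) = max(P₂) = Y ∩ Z` (where `P₁`, `P₂` are the
subposets induced on `Y` and `Z`), one has `dim(P) ≤ f(dim(P₁), dim(P₂))`. -/
theorem no_stacking_bound :
    ¬ ∃ f : ℕ × ℕ → ℕ, ∀ (α : Type) (_ : Fintype α) (r : α → α → Prop),
      IsPartialOrder α r → ∀ Y Z : Set α, Y ∪ Z = Set.univ →
      {y ∈ Y | ∀ y' ∈ Y, r y' y → y' = y} = Y ∩ Z →
      {z ∈ Z | ∀ z' ∈ Z, r z z' → z' = z} = Y ∩ Z →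
      relDim r ≤ f (subDim r Y, subDim r Z) := by
  rintro ⟨f, hf⟩
  -- `N` bounds `f` on `{0, 1, 2}²`, where the dimensions of the two pieces lie.
  let N := (Finset.range 3 ×ˢ Finset.range 3).sup f
  have h := hf (Bool × Fin (N + 1)) inferInstance (stdExample N) (stdExample_isPartialOrder N)
    (upperPart N) (lowerPart N)
    (by ext ⟨x, i⟩; cases x <;> simp [upperPart, lowerPart])
    (minimal_upperPart N) (maximal_lowerPart N)
  have hN : f (subDim (stdExample N) (upperPart N), subDim (stdExample N) (lowerPart N)) ≤ N :=
    Finset.le_sup (f := f) (by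
      simpa using ⟨Nat.lt_succ_of_le (subDim_upperPart N),
        Nat.lt_succ_of_le (subDim_lowerPart N)⟩)
  exact absurd (lt_relDim_stdExample N) (not_lt.2 (h.trans hN))
end
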